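/- For every integer l ≥ 2 and every nonzero complex number q, the linear map from PG_{l,q} to PG_{l,q⁻¹} determined on anti-Wick basis elements by θ^i θ̄^j ↦ q^{ij} θ^j θ̄^i (the linear extension of the multiplicative map sending θ ↦ θ̄ and θ̄ ↦ θ) is an isomorphism of unital ℂ-algebras. -/

import Mathlib

open scoped BigOperators

namespace Para

/-- The paragrassmann algebra `PG_{l,q}` modeled as families of coefficients
in the anti-Wick basis `{θ^i θ̄^j}`. -/
abbrev PG (l : ℕ) := Fin l → Fin l → ℂ

/-- The anti-Wick basis element `θ^i θ̄^j`. -/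
def basis (l : ℕ) (i j : ℕ) : PG l := fun a b => if (a : ℕ) = i ∧ (b : ℕ) = j then 1 else 0

/-- The multiplication of `PG_{l,q}`:
`(θ^i θ̄^j)(θ^k θ̄^m) = q^{-jk} θ^{i+k} θ̄^{j+m}` when `i+k ≤ l-1` and `j+m ≤ l-1`,
and `0` otherwise. -/
noncomputable def pgMul (l : ℕ) (q : ℂ) (f g : PG l) : PG l := fun p r =>
  ∑ i : Fin l, ∑ j : Fin l, ∑ k : Fin l, ∑ m : Fin l,
    if (i : ℕ) + (k : ℕ) = (p : ℕ) ∧ (j : ℕ) + (m : ℕ) = (r : ℕ)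
      then q ^ (-(((j : ℕ) * (k : ℕ) : ℕ) : ℤ)) * f i j * g k m else 0

/-- The linear map `PG_{l,q} → PG_{l,q⁻¹}` determined on anti-Wick basis elements by
`θ^i θ̄^j ↦ q^{ij} θ^j θ̄^i` (the linear extension of the multiplicative map
`θ ↦ θ̄`, `θ̄ ↦ θ`).  Its coefficient form: `(Φ f)_{a b} = q^{ab} f_{b a}`. -/
noncomputable def phi (l : ℕ) (q : ℂ) (f : PG l) : PG l :=
  fun a b => q ^ ((a : ℕ) * (b : ℕ)) * f b a

/- The exponents agree since `(j + m)(i + k) - jk = im + ji + mk`. On the left, `Φ` is applied to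
the product `(θ^i θ̄^j)(θ^k θ̄^m)` formed in `PG_{l,q}`; on the right, `Φ(θ^i θ̄^j)` and
`Φ(θ^k θ̄^m)` are multiplied in `PG_{l,q⁻¹}`. -/
theorem pow_mul_zpow_neg_eq_inv_zpow_neg_mul {G₀ : Type*} [GroupWithZero G₀] {q : G₀}
    (hq : q ≠ 0) (i j k m : ℕ) :
    q ^ ((j + m) * (i + k)) * q ^ (-((j * k : ℕ) : ℤ)) =
      q⁻¹ ^ (-((i * m : ℕ) : ℤ)) * q ^ (j * i) * q ^ (m * k) := by
  simp only [inv_zpow', neg_neg, ← zpow_natCast, ← zpow_add₀ hq]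
  congr 1
  push_cast
  ring

section Phi

variable (l : ℕ) (q : ℂ)

theorem isLinearMap_phi : IsLinearMap ℂ (phi l q) where
  map_add f g := by
    ext a b
    exact mul_add _ _ _
  map_smul c f := by
    ext a b
    exact mul_left_comm _ _ _

theorem phi_basis (i j : ℕ) : phi l q (basis l i j) = q ^ (i * j) • basis l j i := by
  ext a b
  by_cases h : (a : ℕ) = j ∧ (b : ℕ) = i
  · simp [phi, basis, h.1, h.2, mul_comm]
  · simp [phi, basis, h, and_comm]

variable {q}

theorem leftInverse_phi_inv (hq : q ≠ 0) : Function.LeftInverse (phi l q⁻¹) (phi l q) := by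
  intro f
  ext a b
  simp only [phi, inv_pow, mul_comm (b : ℕ)]
  exact inv_mul_cancel_left₀ (pow_ne_zero _ hq) _

theorem phi_bijective (hq : q ≠ 0) : Function.Bijective (phi l q) := by
  have phi_phi_inv : Function.LeftInverse (phi l q) (phi l q⁻¹) := by
    simpa only [inv_inv] using leftInverse_phi_inv l (inv_ne_zero hq)
  exact ⟨(leftInverse_phi_inv l hq).injective, phi_phi_inv.surjective⟩

theorem phi_pgMul (hq : q ≠ 0) (f g : PG l) :
    phi l q (pgMul l q f g) = pgMul l q⁻¹ (phi l q f) (phi l q g) := by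
  ext a b
  have summand_eq (i j k m : Fin l) :
      (q ^ ((a : ℕ) * b) * if (i : ℕ) + k = b ∧ (j : ℕ) + m = a then
        q ^ (-((j * k : ℕ) : ℤ)) * f i j * g k m else 0) =
      if (j : ℕ) + m = a ∧ (i : ℕ) + k = b then
        q⁻¹ ^ (-((i * m : ℕ) : ℤ)) * phi l q f j i * phi l q g m k else 0 := by
    by_cases h : (j : ℕ) + m = a ∧ (i : ℕ) + k = b
    · rw [if_pos h.symm, if_pos h, ← h.1, ← h.2, phi, phi]
      linear_combination
        f i j * g k m * pow_mul_zpow_neg_eq_inv_zpow_neg_mul hq (i : ℕ) j k m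
    · rw [if_neg (mt And.symm h), if_neg h, mul_zero]
  calc phi l q (pgMul l q f g) a b
      = ∑ i : Fin l, ∑ j : Fin l, ∑ k : Fin l, ∑ m : Fin l,
          if (j : ℕ) + m = a ∧ (i : ℕ) + k = b then
            q⁻¹ ^ (-((i * m : ℕ) : ℤ)) * phi l q f j i * phi l q g m k else 0 := by
        rw [phi, pgMul]
        simp only [Finset.mul_sum, summand_eq]
    _ = pgMul l q⁻¹ (phi l q f) (phi l q g) a b := by
        rw [pgMul, Finset.sum_comm]
        exact Finset.sum_congr rfl fun j _ => Finset.sum_congr rfl fun i _ => Finset.sum_comm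

end Phi

/-- For every integer `l ≥ 2` and every nonzero complex `q`, the map
`θ^i θ̄^j ↦ q^{ij} θ^j θ̄^i` is an isomorphism of unital ℂ-algebras
`PG_{l,q} → PG_{l,q⁻¹}`:  it is ℂ-linear, bijective, multiplicative and unital. -/
theorem phi_algebra_isomorphism (l : ℕ) (hl : 2 ≤ l) (q : ℂ) (hq : q ≠ 0) :
    (∀ (c : ℂ) (f g : PG l), phi l q (c • f + g) = c • phi l q f + phi l q g) ∧
    Function.Bijective (phi l q) ∧
    (∀ f g : PG l, phi l q (pgMul l q f g) = pgMul l q⁻¹ (phi l q f) (phi l q g)) ∧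
    phi l q (basis l 0 0) = basis l 0 0 := by
  refine ⟨fun c f g => ?_, phi_bijective l hq, phi_pgMul l hq, ?_⟩
  · rw [(isLinearMap_phi l q).map_add, (isLinearMap_phi l q).map_smul]
  · rw [phi_basis, mul_zero, pow_zero, one_smul]

end Para
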